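/- Let E be a collection of pairwise hom-orthogonal bricks over Λ and let T = ⋁{Filt(Gen(M)) : M ∈ E} in tors Λ. Then for each module M ∈ E: (1) there is a torsion class S covered by T such that T = Filt(S ∪ {M}); (2) M is a minimal extending module for S; and (3) S contains every module in E \ {M}. -/

import Mathlib

/-!
Common definitions: the category `mod Λ` of finite(-dimensional) left `Λ`-modules,
torsion(-free) classes, filtration closures, bricks, minimal (co-)extending modules,
and the lattice-theoretic notions for `tors Λ` (ordered by containment).
-/

/-- A bundled (left) `Λ`-module with carrier in `Type`. -/
structure Mdl (Λ : Type) [Ring Λ] : Type 1 where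
  carrier : Type
  [isAddCommGroup : AddCommGroup carrier]
  [isModule : Module Λ carrier]

attribute [instance] Mdl.isAddCommGroup Mdl.isModule

instance {Λ : Type} [Ring Λ] : CoeSort (Mdl Λ) Type :=
  ⟨Mdl.carrier⟩

variable (Λ : Type) [Ring Λ]

/-- Bundle a module. -/
def Mdl.of (X : Type) [AddCommGroup X] [Module Λ X] : Mdl Λ :=
  { carrier := X }

/-- `M` and `N` are isomorphic `Λ`-modules. -/
def MIso (M N : Mdl Λ) : Prop :=
  Nonempty (M.carrier ≃ₗ[Λ] N.carrier)

/-- `N` is a factor (quotient) module of `M`. -/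
def IsFactor (M N : Mdl Λ) : Prop :=
  ∃ f : M.carrier →ₗ[Λ] N.carrier, Function.Surjective f

/-- `N` is a proper factor of `M` (a quotient by a nonzero submodule). -/
def IsProperFactor (M N : Mdl Λ) : Prop :=
  ∃ f : M.carrier →ₗ[Λ] N.carrier, Function.Surjective f ∧ ¬ Function.Injective f

/-- `N` is (isomorphic to) a submodule of `M`. -/
def IsSubmoduleOf (N M : Mdl Λ) : Prop :=
  ∃ f : N.carrier →ₗ[Λ] M.carrier, Function.Injective f

/-- `N` is (isomorphic to) a proper submodule of `M`. -/
def IsProperSubmoduleOf (N M : Mdl Λ) : Prop :=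
  ∃ f : N.carrier →ₗ[Λ] M.carrier, Function.Injective f ∧ ¬ Function.Surjective f

/-- `D` is (isomorphic to) a direct summand of `N`. -/
def IsSummand (D N : Mdl Λ) : Prop :=
  ∃ (i : D.carrier →ₗ[Λ] N.carrier) (p : N.carrier →ₗ[Λ] D.carrier),
    p.comp i = LinearMap.id

/-- `0 → A --f--> M --g--> B → 0` is a short exact sequence. -/
def IsSES {A M B : Mdl Λ} (f : A.carrier →ₗ[Λ] M.carrier)
    (g : M.carrier →ₗ[Λ] B.carrier) : Prop :=
  Function.Injective f ∧ Function.Surjective g ∧ LinearMap.range f = LinearMap.ker g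

/-- The short exact sequence `0 → A --f--> M --g--> B → 0` splits. -/
def SplitsSES {A M B : Mdl Λ} (_f : A.carrier →ₗ[Λ] M.carrier)
    (g : M.carrier →ₗ[Λ] B.carrier) : Prop :=
  ∃ s : B.carrier →ₗ[Λ] M.carrier, g.comp s = LinearMap.id

/-- `M` is an extension of `B` by `A`, i.e. there is a s.e.s. `0 → A → M → B → 0`. -/
def ExtOf (M A B : Mdl Λ) : Prop :=
  ∃ (f : A.carrier →ₗ[Λ] M.carrier) (g : M.carrier →ₗ[Λ] B.carrier), IsSES Λ f g

/-- A torsion class in `mod Λ`: a class of finite(-dimensional) modules containing `0`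
and closed under isomorphisms, factor modules and extensions. -/
structure IsTorsionClass (T : Set (Mdl Λ)) : Prop where
  fin : ∀ M ∈ T, Module.Finite Λ M.carrier
  zero_mem : ∀ M : Mdl Λ, Subsingleton M.carrier → M ∈ T
  iso_closed : ∀ M ∈ T, ∀ N : Mdl Λ, MIso Λ M N → N ∈ T
  factor_closed : ∀ M ∈ T, ∀ N : Mdl Λ, IsFactor Λ M N → N ∈ T
  ext_closed : ∀ A ∈ T, ∀ B ∈ T, ∀ M : Mdl Λ, ExtOf Λ M A B → M ∈ T

/-- A torsion-free class in `mod Λ`: a class of finite(-dimensional) modules containing `0`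
and closed under isomorphisms, submodules and extensions. -/
structure IsTorsionFreeClass (F : Set (Mdl Λ)) : Prop where
  fin : ∀ M ∈ F, Module.Finite Λ M.carrier
  zero_mem : ∀ M : Mdl Λ, Subsingleton M.carrier → M ∈ F
  iso_closed : ∀ M ∈ F, ∀ N : Mdl Λ, MIso Λ M N → N ∈ F
  sub_closed : ∀ M ∈ F, ∀ N : Mdl Λ, IsSubmoduleOf Λ N M → N ∈ F
  ext_closed : ∀ A ∈ F, ∀ B ∈ F, ∀ M : Mdl Λ, ExtOf Λ M A B → M ∈ F

/-- `Filt S M`: `M` admits a filtration `0 = M₀ ⊆ M₁ ⊆ ⋯ ⊆ M_l = M` whose successive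
quotients are isomorphic to modules in `S`. -/
inductive Filt (S : Set (Mdl Λ)) : Mdl Λ → Prop
  | of_subsingleton (M : Mdl Λ) (h : Subsingleton M.carrier) : Filt S M
  | step (M : Mdl Λ) (N : Submodule Λ M.carrier) (X : Mdl Λ) (hX : X ∈ S)
      (hN : Filt S (Mdl.of Λ N)) (e : Nonempty ((M.carrier ⧸ N) ≃ₗ[Λ] X.carrier)) :
      Filt S M

/-- The filtration closure `Filt(S)` as a set of modules. -/
def FiltSet (S : Set (Mdl Λ)) : Set (Mdl Λ) := {M | Filt Λ S M}

/-- `Gen(M)`: the class of factor modules of finite direct sums of copies of `M`. -/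
def GenSet (M : Mdl Λ) : Set (Mdl Λ) :=
  {N | ∃ (n : ℕ) (f : (Fin n → M.carrier) →ₗ[Λ] N.carrier), Function.Surjective f}

/-- `T^⊥ = {X ∈ mod Λ : Hom_Λ(N, X) = 0 for all N ∈ T}`. -/
def Perp (T : Set (Mdl Λ)) : Set (Mdl Λ) :=
  {X | Module.Finite Λ X.carrier ∧ ∀ N ∈ T, ∀ f : N.carrier →ₗ[Λ] X.carrier, f = 0}

/-- A brick: a module (in `mod Λ`) whose endomorphism ring is a division ring,
i.e. it is nonzero and every nonzero endomorphism is invertible. -/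
def IsBrick (M : Mdl Λ) : Prop :=
  Module.Finite Λ M.carrier ∧ Nontrivial M.carrier ∧
    ∀ f : M.carrier →ₗ[Λ] M.carrier, f ≠ 0 → Function.Bijective f

/-- An indecomposable module: nonzero, and not the direct sum of two nonzero submodules. -/
def Indec (M : Mdl Λ) : Prop :=
  Nontrivial M.carrier ∧
    ∀ p q : Submodule Λ M.carrier, IsCompl p q → p = ⊥ ∨ q = ⊥

/-- `M` is a minimal extending module for the torsion class `T`:
(P1) every proper factor of `M` is in `T`;
(P2) if `0 → M → X → N → 0` is non-split exact with `N ∈ T`, then `X ∈ T`;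
(P3) `Hom_Λ(T, M) = 0`. -/
structure IsMinExt (T : Set (Mdl Λ)) (M : Mdl Λ) : Prop where
  fin : Module.Finite Λ M.carrier
  p1 : ∀ N : Mdl Λ, IsProperFactor Λ M N → N ∈ T
  p2 : ∀ (X N : Mdl Λ) (f : M.carrier →ₗ[Λ] X.carrier) (g : X.carrier →ₗ[Λ] N.carrier),
      IsSES Λ f g → ¬ SplitsSES Λ f g → N ∈ T → X ∈ T
  p3 : ∀ N ∈ T, ∀ f : N.carrier →ₗ[Λ] M.carrier, f = 0

/-- `M` is a minimal co-extending module for the torsion-free class `F`: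
(P1') every proper submodule of `M` is in `F`;
(P2') if `0 → F' → X → M → 0` is non-split exact with `F' ∈ F`, then `X ∈ F`;
(P3') `Hom_Λ(M, F) = 0`. -/
structure IsMinCoExt (F : Set (Mdl Λ)) (M : Mdl Λ) : Prop where
  fin : Module.Finite Λ M.carrier
  p1 : ∀ N : Mdl Λ, IsProperSubmoduleOf Λ N M → N ∈ F
  p2 : ∀ (X F' : Mdl Λ) (f : F'.carrier →ₗ[Λ] X.carrier) (g : X.carrier →ₗ[Λ] M.carrier),
      IsSES Λ f g → ¬ SplitsSES Λ f g → F' ∈ F → X ∈ F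
  p3 : ∀ F' ∈ F, ∀ f : M.carrier →ₗ[Λ] F'.carrier, f = 0

/-- `T'` covers `T` in the lattice `tors Λ` of torsion classes ordered by containment. -/
def TorsCovers (T' T : Set (Mdl Λ)) : Prop :=
  IsTorsionClass Λ T' ∧ IsTorsionClass Λ T ∧ T ⊂ T' ∧
    ∀ Y : Set (Mdl Λ), IsTorsionClass Λ Y → T ⊂ Y → Y ⊆ T' → Y = T'

/-- `F'` covers `F` in the lattice `torf Λ` of torsion-free classes ordered by containment. -/
def TorfCovers (F' F : Set (Mdl Λ)) : Prop :=
  IsTorsionFreeClass Λ F' ∧ IsTorsionFreeClass Λ F ∧ F ⊂ F' ∧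
    ∀ Y : Set (Mdl Λ), IsTorsionFreeClass Λ Y → F ⊂ Y → Y ⊆ F' → Y = F'

/-- The join `⋁ A` of a family of torsion classes in `tors Λ`: the smallest torsion
class containing all members of `A`. -/
def TorsJoin (A : Set (Set (Mdl Λ))) : Set (Mdl Λ) :=
  ⋂₀ {T : Set (Mdl Λ) | IsTorsionClass Λ T ∧ ∀ S ∈ A, S ⊆ T}

/-- A completely join-irreducible element of `tors Λ`: a torsion class `T` such that
`T ∈ A` whenever `A` is a set of torsion classes with `⋁ A = T`. -/
def CompletelyJoinIrred (T : Set (Mdl Λ)) : Prop :=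
  IsTorsionClass Λ T ∧
    ∀ A : Set (Set (Mdl Λ)), (∀ S ∈ A, IsTorsionClass Λ S) → TorsJoin Λ A = T → T ∈ A

/-- The join representation `⋁ A` is irredundant in `tors Λ`:
every proper subset has strictly smaller join. -/
def TorsIrredundant (A : Set (Set (Mdl Λ))) : Prop :=
  ∀ B : Set (Set (Mdl Λ)), B ⊂ A → TorsJoin Λ B ⊂ TorsJoin Λ A

/-- `A` is the canonical join representation of its join in `tors Λ` (equivalently, a face
of the canonical join complex `Γ(tors Λ)`): `⋁ A` is irredundant, and `A ≪ B` for every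
irredundant join representation `⋁ B` of the same element. -/
def TorsCJR (A : Set (Set (Mdl Λ))) : Prop :=
  (∀ S ∈ A, IsTorsionClass Λ S) ∧ TorsIrredundant Λ A ∧
    ∀ B : Set (Set (Mdl Λ)), (∀ S ∈ B, IsTorsionClass Λ S) →
      TorsJoin Λ B = TorsJoin Λ A → TorsIrredundant Λ B → ∀ a ∈ A, ∃ b ∈ B, a ⊆ b

/-- `M` and `N` are hom-orthogonal: `Hom_Λ(M, N) = 0` and `Hom_Λ(N, M) = 0`. -/
def HomOrthogonal (M N : Mdl Λ) : Prop :=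
  (∀ f : M.carrier →ₗ[Λ] N.carrier, f = 0) ∧ ∀ f : N.carrier →ₗ[Λ] M.carrier, f = 0


section helpers18
variable {Λ : Type} [Ring Λ]

theorem h18_filt_factor {G : Set (Mdl Λ)}
    (hG : ∀ X ∈ G, ∀ Z : Mdl Λ, IsFactor Λ X Z → ∃ X' ∈ G, MIso Λ Z X')
    {M : Mdl Λ} (h : Filt Λ G M) :
    ∀ M' : Mdl Λ, IsFactor Λ M M' → Filt Λ G M' := by
  induction h with
  | of_subsingleton M hs =>
    rintro M' ⟨f, hf⟩
    exact Filt.of_subsingleton M' hf.subsingleton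
  | step M N X hX hN e ih =>
    rintro M' ⟨f, hf⟩
    obtain ⟨e⟩ := e
    have h1 : IsFactor Λ X (Mdl.of Λ (M'.carrier ⧸ N.map f)) := by
      refine ⟨(N.mapQ (N.map f) f (Submodule.le_comap_map f N)).comp e.symm.toLinearMap, ?_⟩
      intro y
      obtain ⟨y, rfl⟩ := Submodule.mkQ_surjective (N.map f) y
      obtain ⟨x, rfl⟩ := hf y
      refine ⟨e (Submodule.Quotient.mk x), ?_⟩
      change N.mapQ (N.map f) f (Submodule.le_comap_map f N)
        (e.symm (e (Submodule.Quotient.mk x))) = Submodule.Quotient.mk (f x)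
      rw [e.symm_apply_apply]
      rfl
    obtain ⟨X', hX', e'⟩ := hG X hX _ h1
    refine Filt.step M' (N.map f) X' hX' (ih _ ⟨f.submoduleMap N, f.submoduleMap_surjective N⟩) e'

theorem h18_filt_ext {G : Set (Mdl Λ)}
    (hG : ∀ X ∈ G, ∀ Z : Mdl Λ, IsFactor Λ X Z → ∃ X' ∈ G, MIso Λ Z X')
    {B : Mdl Λ} (h : Filt Λ G B) :
    ∀ A X : Mdl Λ, Filt Λ G A → ExtOf Λ X A B → Filt Λ G X := by
  induction h with
  | of_subsingleton B hs =>
    rintro A X hA ⟨f, g, hf, hg, hfg⟩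
    refine h18_filt_factor hG hA X ⟨f, ?_⟩
    rw [← LinearMap.range_eq_top, hfg, LinearMap.ker_eq_top]
    ext x
    exact Subsingleton.elim _ _
  | step B N Z hZ hN e ih =>
    rintro A X hA ⟨f, g, hf, hg, hfg⟩
    obtain ⟨e⟩ := e
    have hmem : ∀ a, g (f a) = 0 := fun a => by
      have : f a ∈ LinearMap.ker g := hfg ▸ LinearMap.mem_range_self f a
      simpa using this
    refine Filt.step X (N.comap g) Z hZ (ih A _ hA
      ⟨f.codRestrict (N.comap g) (fun a => by simp [hmem]),
       g.restrict (p := N.comap g) (q := N) (fun x hx => hx), ?_, ?_, ?_⟩) ⟨?_⟩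
    · intro a b hab
      exact hf (congrArg Subtype.val hab)
    · rintro ⟨y, hy⟩
      obtain ⟨x, rfl⟩ := hg y
      exact ⟨⟨x, hy⟩, rfl⟩
    · ext ⟨x, hx⟩
      constructor
      · rintro ⟨a, ha⟩
        have ha' : f a = x := congrArg Subtype.val ha
        refine Subtype.ext ?_
        change g x = 0
        rw [← ha', hmem]
      · intro h0
        have h0' : g x = 0 := congrArg Subtype.val h0
        have : x ∈ LinearMap.range f := by rw [hfg]; exact h0'
        obtain ⟨a, ha⟩ := this
        exact ⟨a, Subtype.ext ha⟩
    · have hs : Function.Surjective (N.mkQ.comp g) := N.mkQ_surjective.comp hg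
      have hk : N.comap g = LinearMap.ker (N.mkQ.comp g) := by
        rw [LinearMap.ker_comp, Submodule.ker_mkQ]
      exact (Submodule.quotEquivOfEq _ _ hk).trans
        (((N.mkQ.comp g).quotKerEquivOfSurjective hs).trans e)

theorem h18_filt_le {G T : Set (Mdl Λ)} (hT : IsTorsionClass Λ T) (hG : G ⊆ T)
    {M : Mdl Λ} (h : Filt Λ G M) : M ∈ T := by
  induction h with
  | of_subsingleton M hs => exact hT.zero_mem M hs
  | step M N X hX hN e ih =>
    obtain ⟨e⟩ := e
    refine hT.ext_closed _ ih X (hG hX) M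
      ⟨N.subtype, e.toLinearMap.comp N.mkQ, N.injective_subtype,
        e.surjective.comp N.mkQ_surjective, ?_⟩
    rw [LinearEquiv.ker_comp, Submodule.ker_mkQ]
    exact N.range_subtype

theorem h18_filt_self {G : Set (Mdl Λ)} {M : Mdl Λ} (h : M ∈ G) : Filt Λ G M :=
  Filt.step M ⊥ M h (Filt.of_subsingleton _ (inferInstanceAs (Subsingleton (⊥ : Submodule Λ M.carrier))))
    ⟨Submodule.quotEquivOfEqBot ⊥ rfl⟩

theorem h18_filt_tors {G : Set (Mdl Λ)}
    (hG : ∀ X ∈ G, ∀ Z : Mdl Λ, IsFactor Λ X Z → ∃ X' ∈ G, MIso Λ Z X')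
    {T : Set (Mdl Λ)} (hT : IsTorsionClass Λ T) (hGT : G ⊆ T) :
    IsTorsionClass Λ (FiltSet Λ G) where
  fin M hM := hT.fin M (h18_filt_le hT hGT hM)
  zero_mem M hM := Filt.of_subsingleton M hM
  iso_closed M hM N h := by
    obtain ⟨e⟩ := h
    exact h18_filt_factor hG hM N ⟨e.toLinearMap, e.surjective⟩
  factor_closed M hM N h := h18_filt_factor hG hM N h
  ext_closed A hA B hB M h := h18_filt_ext hG hB A M hA h

theorem h18_finite_ext {A B M : Mdl Λ} (hA : Module.Finite Λ A.carrier)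
    (hB : Module.Finite Λ B.carrier) (h : ExtOf Λ M A B) : Module.Finite Λ M.carrier := by
  obtain ⟨f, g, hf, hg, hfg⟩ := h
  have : Module.Finite Λ (LinearMap.ker g) := by
    rw [← hfg]
    infer_instance
  have : Module.Finite Λ (M.carrier ⧸ LinearMap.ker g) :=
    Module.Finite.equiv (g.quotKerEquivOfSurjective hg).symm
  exact Module.Finite.of_submodule_quotient (LinearMap.ker g)

theorem h18_all_tors : IsTorsionClass Λ {M : Mdl Λ | Module.Finite Λ M.carrier} where
  fin M hM := hM
  zero_mem M hM := by
    have := hM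
    exact (inferInstance : Module.Finite Λ M.carrier)
  iso_closed M hM N h := by
    obtain ⟨e⟩ := h
    have : Module.Finite Λ M.carrier := hM
    exact Module.Finite.equiv e
  factor_closed M hM N h := by
    obtain ⟨f, hf⟩ := h
    have : Module.Finite Λ M.carrier := hM
    exact Module.Finite.of_surjective f hf
  ext_closed A hA B hB M h := h18_finite_ext hA hB h

theorem h18_pow_mem {T : Set (Mdl Λ)} (hT : IsTorsionClass Λ T) {M : Mdl Λ} (hM : M ∈ T)
    (n : ℕ) : Mdl.of Λ (Fin n → M.carrier) ∈ T := by
  induction n with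
  | zero => exact hT.zero_mem _ (inferInstanceAs (Subsingleton (Fin 0 → M.carrier)))
  | succ n ih =>
    refine hT.iso_closed (Mdl.of Λ (M.carrier × (Fin n → M.carrier))) ?_ _
      ⟨Fin.consLinearEquiv Λ (fun _ => M.carrier)⟩
    have key : ∃ (f : M.carrier →ₗ[Λ] (M.carrier × (Fin n → M.carrier)))
        (g : (M.carrier × (Fin n → M.carrier)) →ₗ[Λ] (Fin n → M.carrier)),
        Function.Injective f ∧ Function.Surjective g ∧ LinearMap.range f = LinearMap.ker g :=
      ⟨LinearMap.inl Λ M.carrier (Fin n → M.carrier),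
      LinearMap.snd Λ M.carrier (Fin n → M.carrier), LinearMap.inl_injective,
      LinearMap.snd_surjective, LinearMap.range_inl Λ M.carrier (Fin n → M.carrier)⟩
    exact hT.ext_closed M hM _ ih _ key

/-- the join is a torsion class -/
theorem h18_join_tors (E : Set (Mdl Λ)) (hE : ∀ M ∈ E, IsBrick Λ M) :
    IsTorsionClass Λ (TorsJoin Λ ((fun M' : Mdl Λ => FiltSet Λ (GenSet Λ M')) '' E)) where
  fin M hM := by
    refine hM {M : Mdl Λ | Module.Finite Λ M.carrier} ⟨h18_all_tors, ?_⟩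
    rintro _ ⟨M', hM', rfl⟩ X hX
    refine h18_filt_le h18_all_tors ?_ hX
    rintro Z ⟨n, f, hf⟩
    have := (hE M' hM').1
    exact Module.Finite.of_surjective f hf
  zero_mem M hM T hT := hT.1.zero_mem M hM
  iso_closed M hM N h T hT := hT.1.iso_closed M (hM T hT) N h
  factor_closed M hM N h T hT := hT.1.factor_closed M (hM T hT) N h
  ext_closed A hA B hB M h T hT := hT.1.ext_closed A (hA T hT) B (hB T hT) M h

theorem h18_join_le (E : Set (Mdl Λ)) {Y : Set (Mdl Λ)} (hY : IsTorsionClass Λ Y)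
    (hEY : E ⊆ Y) :
    TorsJoin Λ ((fun M' : Mdl Λ => FiltSet Λ (GenSet Λ M')) '' E) ⊆ Y := by
  intro X hX
  refine hX Y ⟨hY, ?_⟩
  rintro _ ⟨M', hM', rfl⟩ X hX
  refine h18_filt_le hY ?_ hX
  rintro Z ⟨n, f, hf⟩
  exact hY.factor_closed _ (h18_pow_mem hY (hEY hM') n) Z ⟨f, hf⟩

theorem h18_le_join (E : Set (Mdl Λ)) :
    E ⊆ TorsJoin Λ ((fun M' : Mdl Λ => FiltSet Λ (GenSet Λ M')) '' E) := by
  intro X hX T hT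
  refine hT.2 _ ⟨X, hX, rfl⟩ (h18_filt_self ⟨1, LinearMap.proj 0, ?_⟩)
  intro x
  exact ⟨fun _ => x, rfl⟩

theorem h18_factor_ext {A X B M : Mdl Λ} {f : A.carrier →ₗ[Λ] X.carrier}
    {g : X.carrier →ₗ[Λ] B.carrier} (h : IsSES Λ f g) (u : X.carrier →ₗ[Λ] M.carrier)
    (hu : u.comp f = 0) : ∃ v : B.carrier →ₗ[Λ] M.carrier, u = v.comp g := by
  obtain ⟨hf, hg, hfg⟩ := h
  have hk : LinearMap.ker g ≤ LinearMap.ker u := by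
    rw [← hfg]
    rintro _ ⟨a, rfl⟩
    exact LinearMap.congr_fun hu a
  refine ⟨((LinearMap.ker g).liftQ u hk).comp (g.quotKerEquivOfSurjective hg).symm.toLinearMap, ?_⟩
  ext x
  have : (g.quotKerEquivOfSurjective hg).symm (g x) = Submodule.Quotient.mk x := by
    rw [LinearEquiv.symm_apply_eq]
    rfl
  simp [this]

/-- finite modules all of whose maps to `M` vanish or are onto -/
def h18_Y (M : Mdl Λ) : Set (Mdl Λ) :=
  {X | Module.Finite Λ X.carrier ∧
    ∀ u : X.carrier →ₗ[Λ] M.carrier, u = 0 ∨ Function.Surjective u}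

theorem h18_Y_factor (M : Mdl Λ) : ∀ A ∈ h18_Y M, ∀ N : Mdl Λ, IsFactor Λ A N → N ∈ h18_Y M := by
  rintro A ⟨hA, hA'⟩ N ⟨f, hf⟩
  refine ⟨Module.Finite.of_surjective f hf, fun u => ?_⟩
  rcases hA' (u.comp f) with h | h
  · left
    ext x
    obtain ⟨a, rfl⟩ := hf x
    exact LinearMap.congr_fun h a
  · right
    exact Function.Surjective.of_comp h

theorem h18_Y_tors (M : Mdl Λ) : IsTorsionClass Λ (h18_Y M) where
  fin X hX := hX.1
  zero_mem X hX := by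
    refine ⟨h18_all_tors.zero_mem X hX, fun u => Or.inl ?_⟩
    ext x
    rw [Subsingleton.elim x 0]
    simp
  iso_closed A hA N h := by
    obtain ⟨e⟩ := h
    exact h18_Y_factor M A hA N ⟨e.toLinearMap, e.surjective⟩
  factor_closed := h18_Y_factor M
  ext_closed A hA B hB X h := by
    refine ⟨h18_finite_ext hA.1 hB.1 h, fun u => ?_⟩
    obtain ⟨f, g, hs⟩ := h
    rcases hA.2 (u.comp f) with h | h
    · obtain ⟨v, rfl⟩ := h18_factor_ext hs u h
      rcases hB.2 v with h | h
      · left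
        rw [h, LinearMap.zero_comp]
      · right
        exact h.comp hs.2.1
    · right
      exact Function.Surjective.of_comp h

/-- members of `T` with no map to `M` -/
def h18_S (T : Set (Mdl Λ)) (M : Mdl Λ) : Set (Mdl Λ) :=
  {X | X ∈ T ∧ ∀ u : X.carrier →ₗ[Λ] M.carrier, u = 0}

theorem h18_S_factor {T : Set (Mdl Λ)} (hT : IsTorsionClass Λ T) (M : Mdl Λ) :
    ∀ A ∈ h18_S T M, ∀ N : Mdl Λ, IsFactor Λ A N → N ∈ h18_S T M := by
  rintro A ⟨hA, hA'⟩ N ⟨f, hf⟩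
  refine ⟨hT.factor_closed A hA N ⟨f, hf⟩, fun u => ?_⟩
  ext x
  obtain ⟨a, rfl⟩ := hf x
  exact LinearMap.congr_fun (hA' (u.comp f)) a

theorem h18_S_tors {T : Set (Mdl Λ)} (hT : IsTorsionClass Λ T) (M : Mdl Λ) :
    IsTorsionClass Λ (h18_S T M) where
  fin X hX := hT.fin X hX.1
  zero_mem X hX := by
    refine ⟨hT.zero_mem X hX, fun u => ?_⟩
    ext x
    rw [Subsingleton.elim x 0]
    simp
  iso_closed A hA N h := by
    obtain ⟨e⟩ := h
    exact h18_S_factor hT M A hA N ⟨e.toLinearMap, e.surjective⟩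
  factor_closed := h18_S_factor hT M
  ext_closed A hA B hB X h := by
    refine ⟨hT.ext_closed A hA.1 B hB.1 X h, fun u => ?_⟩
    obtain ⟨f, g, hs⟩ := h
    obtain ⟨v, rfl⟩ := h18_factor_ext hs u (hA.2 _)
    rw [hB.2 v, LinearMap.zero_comp]

theorem h18_minext {T : Set (Mdl Λ)} (hT : IsTorsionClass Λ T) {M : Mdl Λ}
    (hMT : M ∈ T) (hM : IsBrick Λ M) : IsMinExt Λ (h18_S T M) M where
  fin := hM.1
  p1 := by
    rintro N ⟨f, hf, hi⟩
    refine ⟨hT.factor_closed M hMT N ⟨f, hf⟩, fun u => ?_⟩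
    have h0 : u.comp f = 0 := by
      by_contra hne
      exact hi (Function.Injective.of_comp (hM.2.2 _ hne).1)
    ext x
    obtain ⟨a, rfl⟩ := hf x
    exact LinearMap.congr_fun h0 a
  p2 := by
    intro X N f g hs hns hN
    refine ⟨hT.ext_closed M hMT N hN.1 X ⟨f, g, hs⟩, fun u => ?_⟩
    have h0 : u.comp f = 0 := by
      by_contra hne
      apply hns
      -- retraction
      let e := LinearEquiv.ofBijective _ (hM.2.2 _ hne)
      let r : X.carrier →ₗ[Λ] M.carrier := e.symm.toLinearMap.comp u
      have hr : ∀ m, r (f m) = m := fun m => e.symm_apply_apply m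
      obtain ⟨v, hv⟩ := h18_factor_ext (M := X) hs (LinearMap.id - f.comp r) (by
        ext m
        simp [hr])
      refine ⟨v, ?_⟩
      ext n
      obtain ⟨x, rfl⟩ := hs.2.1 n
      have h1 : v (g x) = x - f (r x) := (LinearMap.congr_fun hv x).symm
      have h2 : g (f (r x)) = 0 := by
        have : f (r x) ∈ LinearMap.ker g := hs.2.2 ▸ LinearMap.mem_range_self f (r x)
        simpa using this
      simp [h1, h2]
    obtain ⟨v, rfl⟩ := h18_factor_ext hs u h0
    rw [hN.2 v, LinearMap.zero_comp]
  p3 N hN f := hN.2 f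

end helpers18

/-- Let `E` be a collection of pairwise hom-orthogonal bricks over `Λ`
and `T = ⋁ {Filt(Gen(M)) : M ∈ E}` in `tors Λ`.  Then for each `M ∈ E` there is a
torsion class `S` covered by `T` such that `T = Filt(S ∪ {M})`, `M` is a minimal
extending module for `S`, and `S` contains every module of `E \ {M}`. -/
theorem statement18 (k : Type) [Field k] (Λ : Type) [Ring Λ] [Algebra k Λ]
    [FiniteDimensional k Λ] (E : Set (Mdl Λ)) (hE : ∀ M ∈ E, IsBrick Λ M)
    (horth : ∀ M ∈ E, ∀ M' ∈ E, M ≠ M' → HomOrthogonal Λ M M')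
    (M : Mdl Λ) (hM : M ∈ E) :
    ∃ S : Set (Mdl Λ),
      TorsCovers Λ (TorsJoin Λ ((fun M' : Mdl Λ => FiltSet Λ (GenSet Λ M')) '' E)) S ∧
      TorsJoin Λ ((fun M' : Mdl Λ => FiltSet Λ (GenSet Λ M')) '' E) =
        FiltSet Λ (insert M S) ∧
      IsMinExt Λ S M ∧
      ∀ M' ∈ E, M' ≠ M → M' ∈ S := by
  have hT := h18_join_tors E hE
  have hET := h18_le_join E
  have hTle := fun {Y : Set (Mdl Λ)} => h18_join_le E (Y := Y)
  generalize TorsJoin Λ ((fun M' : Mdl Λ => FiltSet Λ (GenSet Λ M')) '' E) = T at *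
  have hS := h18_S_tors hT M
  have hmin := h18_minext hT (hET hM) (hE M hM)
  have hES : ∀ M' ∈ E, M' ≠ M → M' ∈ h18_S T M := fun M' hM' hne =>
    ⟨hET hM', (horth M' hM' M hM hne).1⟩
  have hTY : T ⊆ h18_Y M := by
    refine hTle (h18_Y_tors M) ?_
    intro M' hM'
    refine ⟨(hE M' hM').1, fun u => ?_⟩
    by_cases hne : M' = M
    · subst hne
      by_cases hu : u = 0
      · exact Or.inl hu
      · exact Or.inr ((hE M' hM').2.2 u hu).2
    · exact Or.inl ((horth M' hM' M hM hne).1 u)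
  have hsub : insert M (h18_S T M) ⊆ T := by
    rintro X (rfl | hX)
    · exact hET hM
    · exact hX.1
  have hfac : ∀ X ∈ insert M (h18_S T M), ∀ Z : Mdl Λ, IsFactor Λ X Z →
      ∃ X' ∈ insert M (h18_S T M), MIso Λ Z X' := by
    rintro X (rfl | hX) Z ⟨f, hf⟩
    · by_cases hi : Function.Injective f
      · exact ⟨X, Or.inl rfl, ⟨(LinearEquiv.ofBijective f ⟨hi, hf⟩).symm⟩⟩
      · exact ⟨Z, Or.inr (hmin.p1 Z ⟨f, hf, hi⟩), ⟨LinearEquiv.refl Λ _⟩⟩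
    · exact ⟨Z, Or.inr (hS.factor_closed X hX Z ⟨f, hf⟩), ⟨LinearEquiv.refl Λ _⟩⟩
  have hTF : T ⊆ FiltSet Λ (insert M (h18_S T M)) := by
    refine hTle (h18_filt_tors hfac hT hsub) ?_
    intro M' hM'
    refine h18_filt_self ?_
    by_cases hne : M' = M
    · exact Or.inl hne
    · exact Or.inr (hES M' hM' hne)
  refine ⟨h18_S T M, ⟨hT, hS, ⟨fun X hX => hX.1, fun h => ?_⟩, ?_⟩,
    Set.Subset.antisymm hTF (fun X hX => h18_filt_le hT hsub hX), hmin, hES⟩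
  · have h1 := (h (hET hM)).2 LinearMap.id
    have := (hE M hM).2.1
    obtain ⟨x, hx⟩ := exists_ne (0 : M.carrier)
    exact hx (LinearMap.congr_fun h1 x)
  · intro Y hY hSY hYT
    refine Set.Subset.antisymm hYT ?_
    obtain ⟨X, hXY, hXS⟩ := Set.exists_of_ssubset hSY
    have : ∃ u : X.carrier →ₗ[Λ] M.carrier, u ≠ 0 := by
      by_contra hcon
      push Not at hcon
      exact hXS ⟨hYT hXY, hcon⟩
    obtain ⟨u, hu⟩ := this
    have hMY : M ∈ Y := hY.factor_closed X hXY M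
      ⟨u, ((hTY (hYT hXY)).2 u).resolve_left hu⟩
    intro Z hZ
    refine h18_filt_le hY ?_ (hTF hZ)
    rintro W (rfl | hW)
    · exact hMY
    · exact hSY.1 hW
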